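/- Let c > 0, let b ∈ (0,1), set q_n = 1 − c/n, and let (M_n) be a sequence of integers with 1 ≤ M_n ≤ n−1 and lim_{n→∞} M_n/n = b. Then lim_{n→∞} 𝒫_n^{q_n}(S(n,M_n)) = (c e^{−c} (e^{bc} − 1)/(1 − e^{−c})) · (1 − b + (1/c) log((1 − e^{−c})/(1 − e^{−bc}))). -/

import Mathlib

open Finset Filter

/-- The number of inversions of a permutation of `Fin n`. -/
def invCount (n : ℕ) (σ : Equiv.Perm (Fin n)) : ℕ :=
  (Finset.univ.filter (fun p : Fin n × Fin n => p.1 < p.2 ∧ σ p.2 < σ p.1)).card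

/-- Normalization constant of the Mallows distribution:
`Z_n(q) = ∑_{σ ∈ S_n} q^{inv σ}`. -/
noncomputable def mallowsZ (n : ℕ) (q : ℝ) : ℝ :=
  ∑ σ : Equiv.Perm (Fin n), q ^ invCount n σ

/-- The Mallows probability of a set `A` of permutations:
`P_n^q(A) = (∑_{σ ∈ A} q^{inv σ}) / Z_n(q)`. -/
noncomputable def mallowsProb (n : ℕ) (q : ℝ) (A : Finset (Equiv.Perm (Fin n))) : ℝ :=
  (∑ σ ∈ A, q ^ invCount n σ) / mallowsZ n q

/-- The success event for the strategy `S(n,M)`.  Positions are indexed by `Fin n`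
(the index `i : Fin n` represents the `(i+1)`-st arriving item) and ranks are the
values of `σ` (the value `n-1`, i.e. the top of `Fin n`, represents the highest
rank `n`).  For `M ≥ 1` the strategy succeeds iff for some position `j` with
`(j:ℕ) ≥ M` (i.e. item number `j+1 ≥ M+1`) the item at position `j` has the top
rank and the maximum rank among the items strictly before position `j` equals the
maximum rank among the first `M` items.  For `M = 0` it succeeds iff the first
item has top rank. -/
def winEvent (n M : ℕ) : Finset (Equiv.Perm (Fin n)) :=
  if M = 0 then
    Finset.univ.filter (fun σ => ∀ i : Fin n, (i : ℕ) = 0 → (σ i : ℕ) = n - 1)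
  else
    Finset.univ.filter (fun σ => ∃ j : Fin n, M ≤ (j : ℕ) ∧ (σ j : ℕ) = n - 1 ∧
      (Finset.univ.filter (fun i : Fin n => i < j)).sup (fun i => (σ i : ℕ)) =
      (Finset.univ.filter (fun i : Fin n => (i : ℕ) < M)).sup (fun i => (σ i : ℕ)))

/-- `𝒫_n^q(S(n,M))`, the success probability of the strategy `S(n,M)` under the
Mallows distribution with parameter `q`. -/
noncomputable def succProb (n M : ℕ) (q : ℝ) : ℝ := mallowsProb n q (winEvent n M)

/-!
Build a Mallows permutation by appending one arrival at a time: the rank of the new item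
relative to its predecessors is free, an item with `i` better predecessors contributes the factor
`q ^ i`, and it is a record exactly when `i = 0`. Hence, with `[k] = 1 + q + ⋯ + q ^ (k - 1)`, the
generating function of the number of records in positions `≥ M` is `Z_M ∏_{M ≤ k < n} (t + q [k])`.

The strategy `S(n, M)` wins iff there is exactly one such record, so the coefficient of `t` gives
`𝒫 = q ^ (n - M) [M] / [n] * ∑_{M ≤ k < n} 1 / (q [k])`.

Finally `1 / [k] = (1 - q) + q ^ k / [k]`, and `q ^ k / [k]` equals `log [k + 1] - log [k]` up to
the square of `q ^ k / [k] = O(1 / n)`, so the sum telescopes in the limit.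
-/

namespace Mallows

/-! ### Records and the winning event -/

section Records

variable {ι α : Type*} [LT ι] [LT α]

/-- `k` is a record (left-to-right maximum) of `f`: the value `f k` beats all earlier values. -/
def IsRecord (f : ι → α) (k : ι) : Prop := ∀ i < k, f i < f k

instance {n : ℕ} [DecidableLT α] (f : Fin n → α) : DecidablePred (IsRecord f) :=
  fun k => inferInstanceAs (Decidable (∀ i < k, f i < f k))

end Records

/-- The number of records of `σ` at the (zero-based) positions `≥ M`, that is, among the items
arriving after the first `M`. -/
def recordCount {n : ℕ} (M : ℕ) (σ : Equiv.Perm (Fin n)) : ℕ :=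
  #{k : Fin n | M ≤ k ∧ IsRecord σ k}

lemma sup_lt_eq_sup_lt_iff_forall_not_isRecord {n M : ℕ} {α : Type*} [LinearOrder α] [OrderBot α]
    (f : Fin n → α) {j : Fin n} (hM : 1 ≤ M) (hMj : M ≤ j) :
    ({i : Fin n | i < j} : Finset (Fin n)).sup f = ({i : Fin n | (i : ℕ) < M} : Finset _).sup f ↔
      ∀ k < j, M ≤ (k : ℕ) → ¬ IsRecord f k := by
  constructor
  · intro hsup k hkj hMk hk
    have h_le : f k ≤ ({i : Fin n | i < j} : Finset _).sup f := le_sup (by simpa using hkj)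
    have h_lt : ({i : Fin n | (i : ℕ) < M} : Finset _).sup f < f k := by
      have h_bot : ⊥ < f k := bot_le.trans_lt (hk ⟨0, by omega⟩ (Fin.lt_def.2 (hM.trans hMk)))
      refine (Finset.sup_lt_iff h_bot).2 fun i hi => hk i (Fin.lt_def.2 ?_)
      exact (mem_filter.1 hi).2.trans_le hMk
    exact (h_le.trans_eq hsup).not_gt h_lt
  · intro h_rec
    have h_le (i : Fin n) : i < j → f i ≤ ({i : Fin n | (i : ℕ) < M} : Finset _).sup f := by
      induction i using WellFoundedLT.induction with
      | ind i ih =>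
        intro hij
        rcases lt_or_ge (i : ℕ) M with hiM | hMi
        · exact le_sup (by simpa using hiM)
        · obtain ⟨l, hli, hl⟩ : ∃ l < i, f i ≤ f l := by
            simpa [IsRecord] using h_rec i hij hMi
          exact hl.trans (ih l hli (hli.trans hij))
    refine le_antisymm (Finset.sup_le fun i hi => h_le i (mem_filter.1 hi).2) (sup_mono ?_)
    exact monotone_filter_right _ fun i _ hi => Fin.lt_def.2 (lt_of_lt_of_le hi hMj)

lemma isRecord_of_forall_le {ι α : Type*} [Preorder ι] [PartialOrder α] {f : ι → α}
    (hf : f.Injective) {j : ι} (hj : ∀ i, f i ≤ f j) : IsRecord f j :=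
  fun i hij => (hj i).lt_of_ne (hf.ne hij.ne)

lemma IsRecord.le_of_forall_le {ι α : Type*} [LinearOrder ι] [Preorder α] {f : ι → α} {j k : ι}
    (hk : IsRecord f k) (hj : ∀ i, f i ≤ f j) : k ≤ j :=
  le_of_not_gt fun hjk => (hk j hjk).not_ge (hj k)

lemma recordCount_eq_one_iff {n M : ℕ} {σ : Equiv.Perm (Fin n)} {j : Fin n}
    (hj : ∀ i, σ i ≤ σ j) :
    recordCount M σ = 1 ↔ M ≤ (j : ℕ) ∧ ∀ k < j, M ≤ (k : ℕ) → ¬ IsRecord σ k := by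
  have hj_rec : IsRecord σ j := isRecord_of_forall_le σ.injective hj
  simp only [recordCount, card_eq_one, Finset.ext_iff, mem_filter, mem_univ, true_and,
    mem_singleton]
  constructor
  · rintro ⟨k, hk⟩
    obtain ⟨hMk, hk_rec⟩ := (hk k).2 rfl
    have hMj : M ≤ (j : ℕ) := hMk.trans (hk_rec.le_of_forall_le hj)
    obtain rfl : j = k := (hk j).1 ⟨hMj, hj_rec⟩
    exact ⟨hMj, fun l hl hMl hl_rec => hl.ne ((hk l).1 ⟨hMl, hl_rec⟩)⟩
  · rintro ⟨hMj, h_none⟩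
    refine ⟨j, fun k => ⟨fun ⟨hMk, hk⟩ => ?_, ?_⟩⟩
    · exact (hk.le_of_forall_le hj).eq_of_not_lt fun hkj => h_none k hkj hMk hk
    · rintro rfl
      exact ⟨hMj, hj_rec⟩

lemma mem_winEvent_iff {n M : ℕ} (hM : 1 ≤ M) (σ : Equiv.Perm (Fin n)) :
    σ ∈ winEvent n M ↔ recordCount M σ = 1 := by
  rcases n with _ | n
  · simp [winEvent, recordCount, Nat.one_le_iff_ne_zero.1 hM]
  simp only [winEvent, if_neg (Nat.one_le_iff_ne_zero.1 hM), mem_filter, mem_univ, true_and,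
    Nat.add_sub_cancel]
  obtain ⟨j, hj⟩ := σ.surjective (Fin.last n)
  have h_top : ∀ i, σ i ≤ σ j := fun i => hj ▸ Fin.le_last _
  have h_val (i : Fin (n + 1)) : (σ i : ℕ) = n ↔ i = j := by
    rw [← σ.injective.eq_iff, hj, Fin.ext_iff, Fin.val_last]
  have h_sup (hMj : M ≤ (j : ℕ)) :=
    sup_lt_eq_sup_lt_iff_forall_not_isRecord (fun i => (σ i : ℕ)) hM hMj
  simp only [h_val, recordCount_eq_one_iff h_top]
  constructor
  · rintro ⟨_, hMj, rfl, hsup⟩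
    exact ⟨hMj, (h_sup hMj).1 hsup⟩
  · rintro ⟨hMj, h_none⟩
    exact ⟨j, hMj, rfl, (h_sup hMj).2 h_none⟩

/-! ### Appending one arrival -/

section AppendArrival

variable {n : ℕ}

/-- The arrival order obtained from `τ` by letting one more item, of rank `v`, arrive last; the
ranks `≥ v` of the earlier items are shifted up by one. -/
def appendArrival (v : Fin (n + 1)) (τ : Equiv.Perm (Fin n)) : Equiv.Perm (Fin (n + 1)) :=
  finSuccEquivLast.trans ((Equiv.optionCongr τ).trans (finSuccEquiv' v).symm)

variable (v : Fin (n + 1)) (τ : Equiv.Perm (Fin n))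

@[simp]
lemma appendArrival_last : appendArrival v τ (Fin.last n) = v := by
  simp [appendArrival]

@[simp]
lemma appendArrival_castSucc (i : Fin n) : appendArrival v τ i.castSucc = v.succAbove (τ i) := by
  simp [appendArrival]

lemma appendArrival_bijective :
    Function.Bijective fun p : Fin (n + 1) × Equiv.Perm (Fin n) => appendArrival p.1 p.2 := by
  refine (Fintype.bijective_iff_injective_and_card _).2 ⟨?_, ?_⟩
  · rintro ⟨v, τ⟩ ⟨w, ρ⟩ h
    obtain rfl : v = w := by simpa using DFunLike.congr_fun h (Fin.last n)
    refine Prod.ext rfl (Equiv.ext fun i => v.succAbove_right_injective ?_)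
    simpa using DFunLike.congr_fun h i.castSucc
  · simp [Fintype.card_perm, Nat.factorial_succ]

lemma sum_perm_succ {R : Type*} [AddCommMonoid R] (f : Equiv.Perm (Fin (n + 1)) → R) :
    ∑ σ, f σ = ∑ v, ∑ τ, f (appendArrival v τ) := by
  rw [← Fintype.sum_prod_type']
  exact (appendArrival_bijective.sum_comp f).symm

lemma invCount_eq_sum (σ : Equiv.Perm (Fin n)) :
    invCount n σ = ∑ j, ∑ i, if i < j ∧ σ j < σ i then 1 else 0 := by
  rw [invCount, card_filter, Fintype.sum_prod_type, sum_comm]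

lemma card_lt_succAbove : #{w : Fin n | v < v.succAbove w} = n - v := by
  have h_compl : #{w : Fin n | ¬ (w : ℕ) < v} = n - v := by
    rw [filter_not, card_sdiff_of_subset (filter_subset _ _), card_univ, Fintype.card_fin,
      Fin.card_filter_val_lt, min_eq_right (Nat.lt_succ_iff.1 v.2)]
  simpa [Fin.lt_succAbove_iff_le_castSucc, Fin.le_def] using h_compl

lemma invCount_appendArrival :
    invCount (n + 1) (appendArrival v τ) = invCount n τ + (n - v) := by
  have h_last : ∑ i : Fin n, (if v < v.succAbove (τ i) then 1 else 0) = n - (v : ℕ) := by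
    rw [Equiv.sum_comp τ fun w => if v < v.succAbove w then 1 else 0, ← card_filter,
      card_lt_succAbove]
  simp [invCount_eq_sum, Fin.sum_univ_castSucc, Fin.succAbove_lt_succAbove_iff,
    (Fin.le_last _).not_gt, h_last, -sum_boole]

lemma isRecord_appendArrival_castSucc (k : Fin n) :
    IsRecord (appendArrival v τ) k.castSucc ↔ IsRecord τ k := by
  simp [IsRecord, Fin.forall_fin_succ', Fin.succAbove_lt_succAbove_iff, Fin.le_last]

lemma isRecord_appendArrival_last :
    IsRecord (appendArrival v τ) (Fin.last n) ↔ v = Fin.last n := by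
  constructor
  · intro h
    obtain ⟨j, hj⟩ := (appendArrival v τ).surjective (Fin.last n)
    have h_last : Fin.last n ≤ j := h.le_of_forall_le fun i => hj ▸ Fin.le_last _
    rw [← hj, Fin.last_le_iff.1 h_last, appendArrival_last]
  · rintro rfl
    exact isRecord_of_forall_le (Equiv.injective _) fun i => by simp [Fin.le_last]

lemma recordCount_appendArrival {M : ℕ} (hM : M ≤ n) :
    recordCount M (appendArrival v τ) = recordCount M τ + if v = Fin.last n then 1 else 0 := by
  simp [recordCount, card_filter, Fin.sum_univ_castSucc, isRecord_appendArrival_castSucc,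
    isRecord_appendArrival_last, hM, -sum_boole]

end AppendArrival

/-! ### `q`-numbers -/

/-- The `q`-number `[n] = 1 + q + ⋯ + q ^ (n - 1)`. -/
def qNumber {R : Type*} [Semiring R] (q : R) (n : ℕ) : R := ∑ k ∈ range n, q ^ k

lemma qNumber_succ {R : Type*} [Semiring R] (q : R) (n : ℕ) :
    qNumber q (n + 1) = q * qNumber q n + 1 :=
  geom_sum_succ

lemma qNumber_succ' {R : Type*} [Semiring R] (q : R) (n : ℕ) :
    qNumber q (n + 1) = q ^ n + qNumber q n :=
  geom_sum_succ'

lemma qNumber_pos {R : Type*} [Semiring R] [PartialOrder R] [IsStrictOrderedRing R] {q : R}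
    (hq : 0 ≤ q) {n : ℕ} (hn : n ≠ 0) : 0 < qNumber q n :=
  geom_sum_pos hq hn

lemma sum_pow_sub_eq_mul_qNumber {R : Type*} [Semiring R] (q : R) (n : ℕ) :
    ∑ i : Fin n, q ^ (n - (i : ℕ)) = q * qNumber q n := by
  rw [Fin.sum_univ_eq_sum_range (fun i => q ^ (n - i)), ← sum_range_reflect, qNumber, mul_sum]
  refine sum_congr rfl fun k hk => ?_
  rw [← pow_succ', Nat.sub_sub, Nat.sub_sub_self (by simpa [add_comm] using hk), add_comm]

section QNumberField

variable {K : Type*} [Field K]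

lemma inv_qNumber_eq (q : K) {k : ℕ} (hk : qNumber q k ≠ 0) :
    (qNumber q k)⁻¹ = (1 - q) + q ^ k / qNumber q k := by
  have h_geom : (1 - q) * qNumber q k = 1 - q ^ k := mul_neg_geom_sum q k
  field_simp
  linear_combination -h_geom

variable [LinearOrder K] [IsStrictOrderedRing K]

lemma prod_Ico_mul_qNumber_div_qNumber_succ {q : K} (hq : 0 ≤ q) {M n : ℕ} (hM : 1 ≤ M)
    (hMn : M ≤ n) :
    ∏ k ∈ Ico M n, q * qNumber q k / qNumber q (k + 1) =
      q ^ (n - M) * qNumber q M / qNumber q n := by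
  induction n, hMn using Nat.le_induction with
  | base => simp [(qNumber_pos hq (by omega : M ≠ 0)).ne']
  | succ n hMn ih =>
    have hn := (qNumber_pos hq (by omega : n ≠ 0)).ne'
    rw [prod_Ico_succ_top hMn, ih, Nat.succ_sub hMn, pow_succ]
    field_simp

lemma pow_div_qNumber_anti {q : K} (hq : 0 ≤ q) {M k : ℕ} (hM : 1 ≤ M) (hMk : M ≤ k) :
    q ^ k / qNumber q k ≤ q ^ M / qNumber q M := by
  induction k, hMk using Nat.le_induction with
  | base => rfl
  | succ k hMk ih =>
    refine le_trans ?_ ih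
    rw [div_le_div_iff₀ (qNumber_pos hq (by omega)) (qNumber_pos hq (by omega)), qNumber_succ,
      pow_succ]
    linarith [pow_nonneg hq k]

end QNumberField

/-! ### The generating function of the number of records -/

/-- The generating function `∑_{σ ∈ S_n} q ^ inv σ * t ^ r σ`, where `r σ` is the number of records
of `σ` at positions `≥ M`. -/
def recordGenFun {R : Type*} [CommSemiring R] (q t : R) (M n : ℕ) : R :=
  ∑ σ : Equiv.Perm (Fin n), q ^ invCount n σ * t ^ recordCount M σ

section GenFun

variable {R : Type*} [CommSemiring R] (q t : R)

lemma recordGenFun_self (M : ℕ) :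
    recordGenFun q t M M = ∑ σ : Equiv.Perm (Fin M), q ^ invCount M σ := by
  simp [recordGenFun, recordCount, filter_false_of_mem]

lemma recordGenFun_succ {M n : ℕ} (hM : M ≤ n) :
    recordGenFun q t M (n + 1) = recordGenFun q t M n * (t + q * qNumber q n) := by
  have h_append (v : Fin (n + 1)) :
      ∑ τ, q ^ invCount (n + 1) (appendArrival v τ) * t ^ recordCount M (appendArrival v τ) =
        recordGenFun q t M n * (q ^ (n - (v : ℕ)) * if v = Fin.last n then t else 1) := by
    rw [recordGenFun, sum_mul]
    refine sum_congr rfl fun τ _ => ?_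
    rw [invCount_appendArrival, recordCount_appendArrival v τ hM]
    split_ifs <;> ring
  rw [recordGenFun, sum_perm_succ, sum_congr rfl fun v _ => h_append v, ← mul_sum,
    Fin.sum_univ_castSucc, ← sum_pow_sub_eq_mul_qNumber]
  simp [Fin.castSucc_ne_last, add_comm]

lemma recordGenFun_eq_prod {M n : ℕ} (hM : M ≤ n) :
    recordGenFun q t M n = (∑ σ : Equiv.Perm (Fin M), q ^ invCount M σ) *
      ∏ k ∈ Ico M n, (t + q * qNumber q k) := by
  induction n, hM using Nat.le_induction with
  | base => simp [recordGenFun_self]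
  | succ n hMn ih => rw [recordGenFun_succ q t hMn, ih, prod_Ico_succ_top hMn, mul_assoc]

end GenFun

lemma mallowsZ_pos {q : ℝ} (hq : 0 < q) (n : ℕ) : 0 < mallowsZ n q :=
  sum_pos (fun _ _ => pow_pos hq _) univ_nonempty

lemma mallowsZ_eq_mul_prod_Ico (q : ℝ) {M n : ℕ} (hM : M ≤ n) :
    mallowsZ n q = mallowsZ M q * ∏ k ∈ Ico M n, qNumber q (k + 1) := by
  simpa [recordGenFun, mallowsZ, qNumber_succ, add_comm] using recordGenFun_eq_prod q 1 hM

lemma coeff_one_prod_X_add_C {ι K : Type*} [Field K] {s : Finset ι} {a : ι → K}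
    (ha : ∀ i ∈ s, a i ≠ 0) :
    (∏ i ∈ s, (Polynomial.X + Polynomial.C (a i))).coeff 1 = (∏ i ∈ s, a i) * ∑ i ∈ s, (a i)⁻¹ := by
  classical
  induction s using Finset.induction_on with
  | empty => simp [Polynomial.coeff_one]
  | insert i s hi ih =>
    have hai : a i ≠ 0 := ha i (mem_insert_self i s)
    have h_zero : (∏ i ∈ s, (Polynomial.X + Polynomial.C (a i))).coeff 0 = ∏ i ∈ s, a i := by
      simp [Polynomial.coeff_zero_prod]
    rw [prod_insert hi, prod_insert hi, sum_insert hi, Polynomial.mul_coeff_one, h_zero,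
      ih fun j hj => ha j (mem_insert_of_mem hj)]
    simp only [Polynomial.coeff_add, Polynomial.coeff_X_zero, Polynomial.coeff_X_one,
      Polynomial.coeff_C_zero, Polynomial.coeff_C_succ]
    field_simp
    ring

lemma sum_pow_invCount_recordCount_eq_one {q : ℝ} (hq : 0 < q) {M n : ℕ} (hM : 1 ≤ M)
    (hMn : M ≤ n) :
    ∑ σ : Equiv.Perm (Fin n) with recordCount M σ = 1, q ^ invCount n σ =
      mallowsZ M q * ((∏ k ∈ Ico M n, q * qNumber q k) * ∑ k ∈ Ico M n, (q * qNumber q k)⁻¹) := by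
  have h_ne : ∀ k ∈ Ico M n, q * qNumber q k ≠ 0 := fun k hk =>
    (mul_pos hq (qNumber_pos hq.le (by have := mem_Ico.1 hk; omega))).ne'
  have h_gen : recordGenFun (Polynomial.C q) Polynomial.X M n = Polynomial.C (mallowsZ M q) *
      ∏ k ∈ Ico M n, (Polynomial.X + Polynomial.C (q * qNumber q k)) := by
    simp [recordGenFun_eq_prod _ _ hMn, mallowsZ, qNumber]
  rw [← coeff_one_prod_X_add_C h_ne, ← Polynomial.coeff_C_mul, ← h_gen,
    recordGenFun, Polynomial.finsetSum_coeff, sum_filter]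
  refine sum_congr rfl fun σ _ => ?_
  rw [← Polynomial.C_pow, Polynomial.coeff_C_mul, Polynomial.coeff_X_pow, mul_ite, mul_one,
    mul_zero]
  simp only [eq_comm]

theorem succProb_eq {q : ℝ} (hq : 0 < q) {M n : ℕ} (hM : 1 ≤ M) (hMn : M ≤ n) :
    succProb n M q =
      q ^ (n - M) * qNumber q M / qNumber q n * ∑ k ∈ Ico M n, (q * qNumber q k)⁻¹ := by
  have h_win : winEvent n M = ({σ | recordCount M σ = 1} : Finset _) := by
    ext σ
    simp [mem_winEvent_iff hM]
  rw [succProb, mallowsProb, h_win, sum_pow_invCount_recordCount_eq_one hq hM hMn,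
    mallowsZ_eq_mul_prod_Ico q hMn, mul_div_mul_left _ _ (mallowsZ_pos hq M).ne',
    mul_div_right_comm, ← prod_div_distrib, prod_Ico_mul_qNumber_div_qNumber_succ hq.le hM hMn]

/-! ### Comparing the sum with a logarithm -/

lemma abs_sub_log_one_add_le {a : ℝ} (ha : 0 ≤ a) : |a - Real.log (1 + a)| ≤ a ^ 2 := by
  have h_upper : Real.log (1 + a) ≤ a := by
    linarith [Real.log_le_sub_one_of_pos (show 0 < 1 + a by linarith)]
  have h_lower : a - a ^ 2 ≤ Real.log (1 + a) := by
    refine le_trans ?_ (Real.le_log_one_add_of_nonneg ha)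
    rw [le_div_iff₀ (by linarith)]
    nlinarith [pow_nonneg ha 3, sq_nonneg a]
  rw [abs_of_nonneg (by linarith)]
  linarith

lemma abs_inv_qNumber_sub_log_le {q : ℝ} (hq : 0 ≤ q) {k : ℕ} (hk : k ≠ 0) :
    |(qNumber q k)⁻¹ - ((1 - q) + (Real.log (qNumber q (k + 1)) - Real.log (qNumber q k)))| ≤
      (q ^ k / qNumber q k) ^ 2 := by
  have hk_pos := qNumber_pos hq hk
  have h_ratio : qNumber q (k + 1) / qNumber q k = 1 + q ^ k / qNumber q k := by
    rw [qNumber_succ', add_div, div_self hk_pos.ne', add_comm]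
  rw [← Real.log_div (qNumber_pos hq k.succ_ne_zero).ne' hk_pos.ne', h_ratio,
    inv_qNumber_eq q hk_pos.ne', add_sub_add_left_eq_sub]
  exact abs_sub_log_one_add_le (by positivity)

lemma abs_sum_inv_qNumber_sub_le {q : ℝ} (hq : 0 ≤ q) {M n : ℕ} (hM : 1 ≤ M) (hMn : M ≤ n) :
    |(∑ k ∈ Ico M n, (qNumber q k)⁻¹) -
        ((n - M) * (1 - q) + Real.log (qNumber q n / qNumber q M))| ≤
      n * (q ^ M / qNumber q M) ^ 2 := by
  have h_telescope : ((n : ℝ) - M) * (1 - q) + Real.log (qNumber q n / qNumber q M) =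
      ∑ k ∈ Ico M n, ((1 - q) + (Real.log (qNumber q (k + 1)) - Real.log (qNumber q k))) := by
    rw [sum_add_distrib, sum_Ico_sub (fun k => Real.log (qNumber q k)) hMn,
      Real.log_div (qNumber_pos hq (by omega)).ne' (qNumber_pos hq (by omega)).ne', sum_const,
      Nat.card_Ico, nsmul_eq_mul, Nat.cast_sub hMn]
  have h_term : ∀ k ∈ Ico M n,
      |(qNumber q k)⁻¹ - ((1 - q) + (Real.log (qNumber q (k + 1)) - Real.log (qNumber q k)))| ≤
        (q ^ M / qNumber q M) ^ 2 := fun k hk => by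
    obtain ⟨hMk, -⟩ := mem_Ico.1 hk
    have hk_pos := qNumber_pos hq (by omega : k ≠ 0)
    exact (abs_inv_qNumber_sub_log_le hq (by omega)).trans
      (pow_le_pow_left₀ (by positivity) (pow_div_qNumber_anti hq hM hMk) 2)
  rw [h_telescope, ← sum_sub_distrib]
  calc |_| ≤ _ := abs_sum_le_sum_abs _ _
    _ ≤ #(Ico M n) • (q ^ M / qNumber q M) ^ 2 := sum_le_card_nsmul _ _ _ h_term
    _ ≤ n * (q ^ M / qNumber q M) ^ 2 := by
      rw [nsmul_eq_mul, Nat.card_Ico]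
      gcongr
      omega

/-! ### Asymptotics for `q = 1 - c / n` -/

section Asymptotics

variable {c b : ℝ} {M : ℕ → ℕ}

lemma tendsto_one_sub_div_nat (c : ℝ) : Tendsto (fun n : ℕ => 1 - c / n) atTop (nhds 1) := by
  simpa using (tendsto_const_div_atTop_nhds_zero_nat c).const_sub 1

lemma eventually_one_sub_div_nat_pos (c : ℝ) : ∀ᶠ n : ℕ in atTop, 0 < 1 - c / (n : ℝ) :=
  (tendsto_one_sub_div_nat c).eventually (lt_mem_nhds zero_lt_one)

lemma tendsto_div_self_nat : Tendsto (fun n : ℕ => (n : ℝ) / n) atTop (nhds 1) := by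
  refine tendsto_const_nhds.congr' ?_
  filter_upwards [eventually_ne_atTop 0] with n hn
  rw [div_self (Nat.cast_ne_zero.2 hn)]

lemma tendsto_one_sub_div_pow_exp (c : ℝ)
    (hlim : Tendsto (fun n : ℕ => (M n : ℝ) / n) atTop (nhds b)) :
    Tendsto (fun n : ℕ => (1 - c / n) ^ M n) atTop (nhds (Real.exp (-(b * c)))) := by
  have h_exp : Tendsto (fun n : ℕ => (1 - c / (n : ℝ)) ^ n) atTop (nhds (Real.exp (-c))) := by
    simpa [neg_div, sub_eq_add_neg] using Real.tendsto_one_add_div_pow_exp (-c)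
  have h_rpow := h_exp.rpow hlim (Or.inl (Real.exp_pos _).ne')
  rw [← Real.exp_mul, neg_mul, mul_comm] at h_rpow
  refine h_rpow.congr' ?_
  filter_upwards [eventually_one_sub_div_nat_pos c, eventually_ne_atTop 0] with n hq hn
  rw [← Real.rpow_natCast, ← Real.rpow_natCast, ← Real.rpow_mul hq.le]
  field_simp

lemma tendsto_qNumber_div (hc : c ≠ 0)
    (hlim : Tendsto (fun n : ℕ => (M n : ℝ) / n) atTop (nhds b)) :
    Tendsto (fun n : ℕ => qNumber (1 - c / n) (M n) / n) atTop
      (nhds ((1 - Real.exp (-(b * c))) / c)) := by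
  refine (((tendsto_one_sub_div_pow_exp c hlim).const_sub 1).div_const c).congr' ?_
  filter_upwards [eventually_ne_atTop 0] with n hn
  have h_geom : (1 - (1 - c / n)) * qNumber (1 - c / n) (M n) = 1 - (1 - c / n) ^ M n :=
    mul_neg_geom_sum _ _
  rw [← h_geom]
  field_simp
  ring

lemma one_sub_exp_neg_ne_zero {x : ℝ} (hx : x ≠ 0) : 1 - Real.exp (-x) ≠ 0 := by
  simpa [sub_ne_zero, eq_comm (a := (1 : ℝ))] using hx

lemma tendsto_qNumber_div_qNumber (hc : c ≠ 0)
    (hlim : Tendsto (fun n : ℕ => (M n : ℝ) / n) atTop (nhds b)) :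
    Tendsto (fun n : ℕ => qNumber (1 - c / n) (M n) / qNumber (1 - c / n) n) atTop
      (nhds ((1 - Real.exp (-(b * c))) / (1 - Real.exp (-c)))) := by
  have h_n : Tendsto (fun n : ℕ => qNumber (1 - c / n) n / n) atTop
      (nhds ((1 - Real.exp (-c)) / c)) := by
    simpa using tendsto_qNumber_div hc tendsto_div_self_nat
  have h := (tendsto_qNumber_div hc hlim).div h_n (div_ne_zero (one_sub_exp_neg_ne_zero hc) hc)
  rw [div_div_div_cancel_right₀ hc] at h
  refine h.congr' ?_
  filter_upwards [eventually_ne_atTop 0] with n hn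
  exact div_div_div_cancel_right₀ (Nat.cast_ne_zero.2 hn) _ _

lemma tendsto_mul_sq_pow_div_qNumber (hc : c ≠ 0) (hb : b ≠ 0)
    (hlim : Tendsto (fun n : ℕ => (M n : ℝ) / n) atTop (nhds b)) :
    Tendsto (fun n : ℕ => (n : ℝ) * ((1 - c / n) ^ M n / qNumber (1 - c / n) (M n)) ^ 2) atTop
      (nhds 0) := by
  have h_ratio := (tendsto_one_sub_div_pow_exp c hlim).div (tendsto_qNumber_div hc hlim)
    (div_ne_zero (one_sub_exp_neg_ne_zero (mul_ne_zero hb hc)) hc)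
  have h := (tendsto_inv_atTop_nhds_zero_nat (𝕜 := ℝ)).mul (h_ratio.pow 2)
  rw [zero_mul] at h
  refine h.congr' ?_
  filter_upwards [eventually_ne_atTop 0] with n hn
  rw [Pi.div_apply]
  field_simp

lemma eventually_one_le_of_tendsto_div_nat (hb : 0 < b)
    (hlim : Tendsto (fun n : ℕ => (M n : ℝ) / n) atTop (nhds b)) : ∀ᶠ n in atTop, 1 ≤ M n := by
  filter_upwards [hlim.eventually (lt_mem_nhds hb)] with n hn
  exact Nat.one_le_iff_ne_zero.2 fun h => by simp [h] at hn

lemma tendsto_sum_inv_qNumber (hc : c ≠ 0) (hb : 0 < b) (hM : ∀ᶠ n in atTop, M n ≤ n)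
    (hlim : Tendsto (fun n : ℕ => (M n : ℝ) / n) atTop (nhds b)) :
    Tendsto (fun n : ℕ => ∑ k ∈ Ico (M n) n, (qNumber (1 - c / n) k)⁻¹) atTop
      (nhds ((1 - b) * c +
        Real.log ((1 - Real.exp (-c)) / (1 - Real.exp (-(b * c)))))) := by
  have h_linear : Tendsto (fun n : ℕ => ((n : ℝ) - M n) * (1 - (1 - c / n))) atTop
      (nhds ((1 - b) * c)) := by
    refine ((hlim.const_sub 1).mul_const c).congr' ?_
    filter_upwards [eventually_ne_atTop 0] with n hn
    field_simp
    ring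
  have h_log : Tendsto
      (fun n : ℕ => Real.log (qNumber (1 - c / n) n / qNumber (1 - c / n) (M n))) atTop
      (nhds (Real.log ((1 - Real.exp (-c)) / (1 - Real.exp (-(b * c)))))) := by
    have h_ne := div_ne_zero (one_sub_exp_neg_ne_zero (mul_ne_zero hb.ne' hc))
      (one_sub_exp_neg_ne_zero hc)
    have h_ratio := (tendsto_qNumber_div_qNumber hc hlim).inv₀ h_ne
    simpa only [inv_div] using h_ratio.log (by simpa only [inv_div] using inv_ne_zero h_ne)
  refine tendsto_of_tendsto_of_dist (h_linear.add h_log)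
    (squeeze_zero' (.of_forall fun _ => dist_nonneg) ?_
      (tendsto_mul_sq_pow_div_qNumber hc hb.ne' hlim))
  filter_upwards [eventually_one_sub_div_nat_pos c, hM,
    eventually_one_le_of_tendsto_div_nat hb hlim] with n hq hMn hM1
  rw [dist_comm, Real.dist_eq]
  exact abs_sum_inv_qNumber_sub_le hq.le hM1 hMn

end Asymptotics

end Mallows

open Mallows in
theorem stmt_2_general {c b : ℝ} (hc : c ≠ 0) (hb : 0 < b) {M : ℕ → ℕ}
    (hM : ∀ᶠ n in atTop, M n ≤ n)
    (hlim : Tendsto (fun n : ℕ => (M n : ℝ) / n) atTop (nhds b)) :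
    Tendsto (fun n : ℕ => succProb n (M n) (1 - c / n)) atTop
      (nhds (c * Real.exp (-c) * (Real.exp (b * c) - 1) / (1 - Real.exp (-c)) *
        (1 - b + (1 / c) * Real.log ((1 - Real.exp (-c)) / (1 - Real.exp (-(b * c))))))) := by
  have h_pow : Tendsto (fun n : ℕ => (1 - c / (n : ℝ)) ^ n) atTop (nhds (Real.exp (-c))) := by
    simpa using tendsto_one_sub_div_pow_exp c tendsto_div_self_nat
  have h_prod := (((h_pow.div (tendsto_one_sub_div_pow_exp c hlim) (Real.exp_ne_zero _)).mul
    (tendsto_qNumber_div_qNumber hc hlim)).mul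
    ((tendsto_one_sub_div_nat c).inv₀ one_ne_zero)).mul (tendsto_sum_inv_qNumber hc hb hM hlim)
  convert h_prod.congr' ?_ using 2
  · have := one_sub_exp_neg_ne_zero hc
    rw [Real.exp_neg (b * c)]
    field_simp
  · filter_upwards [eventually_one_sub_div_nat_pos c, hM,
      eventually_one_le_of_tendsto_div_nat hb hlim] with n hq hMn hM1
    rw [succProb_eq hq hM1 hMn, pow_sub₀ _ hq.ne' hMn]
    simp only [Pi.div_apply, mul_inv, ← mul_sum]
    ring

theorem stmt_2 (c b : ℝ) (hc : 0 < c) (hb : b ∈ Set.Ioo (0 : ℝ) 1)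
    (M : ℕ → ℕ) (hM : ∀ n, 2 ≤ n → 1 ≤ M n ∧ M n ≤ n - 1)
    (hlim : Tendsto (fun n : ℕ => (M n : ℝ) / n) atTop (nhds b)) :
    Tendsto (fun n : ℕ => succProb n (M n) (1 - c / n)) atTop
      (nhds (c * Real.exp (-c) * (Real.exp (b * c) - 1) / (1 - Real.exp (-c)) *
        (1 - b + (1 / c) * Real.log ((1 - Real.exp (-c)) / (1 - Real.exp (-(b * c))))))) := by
  have hM_le : ∀ᶠ n in atTop, M n ≤ n := by
    filter_upwards [eventually_ge_atTop 2] with n hn using (hM n hn).2.trans n.pred_le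
  exact stmt_2_general hc.ne' hb.1 hM_le hlim
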